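/- Let ρ_{ℤ,1/2}(α) := θ₂(α)/θ₃(α) for α > 0, where θ₂(α) = Σ_{k∈ℤ} e^{−π(k+1/2)²α} and θ₃(α) = Σ_{k∈ℤ} e^{−πk²α}. Then: (1) for every α > 0, 0 < ρ_{ℤ,1/2}(α) < 1; (2) the function α ↦ ρ_{ℤ,1/2}(α) is strictly decreasing on (0,+∞). -/

import Mathlib

open scoped BigOperators

/-!
The two-dimensional lattice identity `m² + n² = ((m + n)² + (m - n)²) / 2`, together with a split of
`ℤ²` according to the parity of `m + n`, yields the duplication formulas
`θ₂(x)² = 2 θ₂(2x) θ₃(2x)` and `θ₃(x)² = θ₃(2x)² + θ₂(2x)²` (`theta2_sq`, `theta3_sq`). Hence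
`ρ = θ₂/θ₃` satisfies the Landen-type relation `ρ(x)² = 2 ρ(2x) / (1 + ρ(2x)²)` (`rho_sq`).

This forces `ρ ≤ 1` by AM-GM. As `r ↦ 2r / (1 + r²)` is strictly increasing on `[0, 1]`, the
inequality `ρ(2y) < ρ(2x)` implies `ρ(y) < ρ(x)` (`rho_lt_of_double`), so strict monotonicity has to
be checked only for the pairs `2ᴺx, 2ᴺy` with `N` large. There it is immediate
(`rho_lt_of_large`): each term of `θ₂` gives `θ₂(y) ≤ e^{-π(y-x)/4} θ₂(x)`, whereas
`1 ≤ θ₃ ≤ θ₃(1)` on `[1, ∞)`. Finally `ρ(x) < ρ(x/2) ≤ 1`.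
-/

/-- The classical Jacobi theta function `θ₂(x) = Σ_{k∈ℤ} e^{−π(k+1/2)²x}`. -/
noncomputable def theta2 (x : ℝ) : ℝ :=
  ∑' n : ℤ, Real.exp (-Real.pi * ((n : ℝ) + 1 / 2) ^ 2 * x)

/-- The classical Jacobi theta function `θ₃(x) = Σ_{k∈ℤ} e^{−πk²x}`. -/
noncomputable def theta3 (x : ℝ) : ℝ :=
  ∑' n : ℤ, Real.exp (-Real.pi * (n : ℝ) ^ 2 * x)

/-- The ratio `ρ_{ℤ,1/2} = θ₂/θ₃`. -/
noncomputable def rho (x : ℝ) : ℝ := theta2 x / theta3 x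

lemma summable_theta2 {x : ℝ} (hx : 0 < x) :
    Summable fun n : ℤ => Real.exp (-Real.pi * ((n : ℝ) + 1 / 2) ^ 2 * x) := by
  refine (HurwitzKernelBounds.summable_f_int 0 (1 / 2) hx).congr fun n => ?_
  simp [HurwitzKernelBounds.f_int]

lemma summable_theta3 {x : ℝ} (hx : 0 < x) :
    Summable fun n : ℤ => Real.exp (-Real.pi * (n : ℝ) ^ 2 * x) := by
  refine (HurwitzKernelBounds.summable_f_int 0 0 hx).congr fun n => ?_
  simp [HurwitzKernelBounds.f_int]

lemma theta2_pos {x : ℝ} (hx : 0 < x) : 0 < theta2 x :=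
  (summable_theta2 hx).tsum_pos (fun _ => (Real.exp_pos _).le) 0 (Real.exp_pos _)

lemma one_le_theta3 {x : ℝ} (hx : 0 < x) : 1 ≤ theta3 x := by
  simpa [theta3] using (summable_theta3 hx).le_tsum 0 (fun _ _ => (Real.exp_pos _).le)

lemma theta3_le_theta3_one {x : ℝ} (hx : 1 ≤ x) : theta3 x ≤ theta3 1 := by
  refine (summable_theta3 (by linarith)).tsum_le_tsum (fun n => Real.exp_le_exp.2 ?_)
    (summable_theta3 one_pos)
  have : 0 ≤ Real.pi * (n : ℝ) ^ 2 := by positivity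
  nlinarith

/-- The term of `θ₂` with the slowest decay has exponent `-π/4`. -/
lemma theta2_le {x y : ℝ} (hx : 0 < x) (hxy : x ≤ y) :
    theta2 y ≤ Real.exp (-Real.pi / 4 * (y - x)) * theta2 x := by
  unfold theta2
  rw [← tsum_mul_left]
  refine (summable_theta2 (by linarith)).tsum_le_tsum (fun n => ?_)
    ((summable_theta2 hx).mul_left _)
  rw [← Real.exp_add, Real.exp_le_exp]
  have h : (1 / 4 : ℝ) ≤ ((n : ℝ) + 1 / 2) ^ 2 := by
    have h0 : (0 : ℤ) ≤ n * (n + 1) := by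
      rcases le_or_gt 0 n with h | h <;> nlinarith
    have h1 : (0 : ℝ) ≤ n * (n + 1) := by exact_mod_cast h0
    nlinarith
  have h2 : 0 ≤ Real.pi * (y - x) := mul_nonneg Real.pi_pos.le (by linarith)
  nlinarith [mul_le_mul_of_nonneg_left h h2]

/-- The pairs `(m, n)` with `m + n` even are `(u + v, u - v)`, those with `m + n` odd are
`(v - u, -u - v - 1)`. The signs in the odd case are chosen so that the one parametrization
diagonalizes both `m² + n²` and `(m + 1/2)² + (n + 1/2)²`, without a further shift. -/
def paritySplit : (ℤ × ℤ) ⊕ (ℤ × ℤ) → ℤ × ℤ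
  | .inl p => (p.1 + p.2, p.1 - p.2)
  | .inr p => (p.2 - p.1, -p.1 - p.2 - 1)

lemma paritySplit_bijective : Function.Bijective paritySplit := by
  constructor
  · rintro (⟨a, b⟩ | ⟨a, b⟩) (⟨c, d⟩ | ⟨c, d⟩) h <;>
      simp only [paritySplit, Prod.mk.injEq, Sum.inl.injEq, Sum.inr.injEq, reduceCtorEq] at h ⊢ <;>
      omega
  · rintro ⟨m, n⟩
    rcases Int.even_or_odd' (m + n) with ⟨k, hk | hk⟩
    · exact ⟨.inl (k, m - k), by simp only [paritySplit, Prod.mk.injEq]; omega⟩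
    · exact ⟨.inr (-k - 1, m - k - 1), by simp only [paritySplit, Prod.mk.injEq]; omega⟩

lemma tsum_parity {F : ℤ × ℤ → ℝ} (hF : Summable F) :
    ∑' p, F p = ∑' p : ℤ × ℤ, F (p.1 + p.2, p.1 - p.2) +
      ∑' p : ℤ × ℤ, F (p.2 - p.1, -p.1 - p.2 - 1) := by
  let e := Equiv.ofBijective _ paritySplit_bijective
  have h : Summable (F ∘ e) := e.summable_iff.2 hF
  rw [← e.tsum_eq F]
  exact Summable.tsum_sum (h.comp_injective Sum.inl_injective)
    (h.comp_injective Sum.inr_injective)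

lemma summable_prod {f g : ℤ → ℝ} (hf : Summable f) (hg : Summable g) :
    Summable fun p : ℤ × ℤ => f p.1 * g p.2 :=
  summable_mul_of_summable_norm hf.norm hg.norm

lemma tsum_prod {f g : ℤ → ℝ} (hf : Summable f) (hg : Summable g) :
    (∑' n, f n) * ∑' n, g n = ∑' p : ℤ × ℤ, f p.1 * g p.2 :=
  tsum_mul_tsum_of_summable_norm hf.norm hg.norm

lemma theta3_sq {x : ℝ} (hx : 0 < x) :
    theta3 x ^ 2 = theta3 (2 * x) ^ 2 + theta2 (2 * x) ^ 2 := by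
  have h2 := summable_theta2 (x := 2 * x) (by linarith)
  have h3 := summable_theta3 (x := 2 * x) (by linarith)
  have h := summable_theta3 hx
  simp only [sq (theta3 _), sq (theta2 _)]
  unfold theta3 theta2
  rw [tsum_prod h h, tsum_prod h3 h3, tsum_prod h2 h2, tsum_parity (summable_prod h h)]
  congr 1 <;> refine tsum_congr fun p => ?_ <;> simp only [← Real.exp_add] <;> push_cast <;>
    ring_nf

lemma theta2_sq {x : ℝ} (hx : 0 < x) :
    theta2 x ^ 2 = 2 * (theta2 (2 * x) * theta3 (2 * x)) := by
  have h2 := summable_theta2 (x := 2 * x) (by linarith)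
  have h3 := summable_theta3 (x := 2 * x) (by linarith)
  have h := summable_theta2 hx
  rw [two_mul (theta2 _ * _)]
  nth_rw 2 [mul_comm (theta2 _)]
  rw [sq (theta2 x)]
  unfold theta3 theta2
  rw [tsum_prod h h, tsum_prod h3 h2, tsum_prod h2 h3, tsum_parity (summable_prod h h)]
  congr 1 <;> refine tsum_congr fun p => ?_ <;> simp only [← Real.exp_add] <;> push_cast <;>
    ring_nf

lemma rho_pos {x : ℝ} (hx : 0 < x) : 0 < rho x :=
  div_pos (theta2_pos hx) (one_pos.trans_le (one_le_theta3 hx))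

lemma rho_sq {x : ℝ} (hx : 0 < x) :
    rho x ^ 2 = 2 * rho (2 * x) / (1 + rho (2 * x) ^ 2) := by
  have h3 : 0 < theta3 (2 * x) := one_pos.trans_le (one_le_theta3 (by linarith))
  unfold rho
  rw [div_pow, theta2_sq hx, theta3_sq hx]
  field_simp

lemma rho_le_one {x : ℝ} (hx : 0 < x) : rho x ≤ 1 := by
  have h : rho x ^ 2 ≤ 1 := by
    rw [rho_sq hx, div_le_one (by positivity)]
    nlinarith [sq_nonneg (1 - rho (2 * x))]
  nlinarith [rho_pos hx]

lemma rho_lt_of_double {x y : ℝ} (hx : 0 < x) (hy : 0 < y) (h : rho (2 * y) < rho (2 * x)) :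
    rho y < rho x := by
  refine lt_of_pow_lt_pow_left₀ 2 (rho_pos hx).le ?_
  rw [rho_sq hx, rho_sq hy, div_lt_div_iff₀ (by positivity) (by positivity)]
  have hs := rho_le_one (x := 2 * x) (by linarith)
  have hr := rho_pos (x := 2 * y) (by linarith)
  have hrs : 0 < 1 - rho (2 * y) * rho (2 * x) := by nlinarith
  nlinarith [mul_pos (sub_pos.2 h) hrs]

lemma rho_lt_of_double_pow {x y : ℝ} (hx : 0 < x) (hy : 0 < y) (N : ℕ)
    (h : rho (2 ^ N * y) < rho (2 ^ N * x)) : rho y < rho x := by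
  induction N with
  | zero => simpa using h
  | succ N ih =>
    refine ih (rho_lt_of_double (by positivity) (by positivity) ?_)
    rwa [← mul_assoc, ← mul_assoc, ← pow_succ']

lemma rho_lt_of_large {x y : ℝ} (hx : 1 ≤ x) (hxy : x ≤ y)
    (h : Real.exp (-Real.pi / 4 * (y - x)) * theta3 1 < 1) : rho y < rho x := by
  have h2 := theta2_pos (x := x) (by linarith)
  have hy := one_le_theta3 (x := y) (by linarith)
  have h3 := one_le_theta3 (x := x) (by linarith)
  unfold rho
  calc theta2 y / theta3 y ≤ theta2 y := div_le_self (theta2_pos (by linarith)).le hy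
    _ ≤ Real.exp (-Real.pi / 4 * (y - x)) * theta2 x := theta2_le (by linarith) hxy
    _ < theta2 x / theta3 x := by
      rw [lt_div_iff₀ (by linarith)]
      have h4 := mul_le_mul_of_nonneg_left (theta3_le_theta3_one hx)
        (mul_pos (Real.exp_pos (-Real.pi / 4 * (y - x))) h2).le
      nlinarith

lemma rho_strictAnti {x y : ℝ} (hx : 0 < x) (hxy : x < y) : rho y < rho x := by
  have hpow : Filter.Tendsto (fun N : ℕ => (2 : ℝ) ^ N) Filter.atTop Filter.atTop :=
    tendsto_pow_atTop_atTop_of_one_lt one_lt_two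
  have hc : -Real.pi / 4 * (y - x) < 0 := by
    nlinarith [mul_pos Real.pi_pos (sub_pos.2 hxy)]
  have hlim : Filter.Tendsto
      (fun N : ℕ => Real.exp (2 ^ N * (-Real.pi / 4 * (y - x))) * theta3 1)
      Filter.atTop (nhds (0 * theta3 1)) :=
    (Real.tendsto_exp_atBot.comp (hpow.atTop_mul_const_of_neg hc)).mul_const _
  rw [zero_mul] at hlim
  obtain ⟨N, h1, h2⟩ := ((hlim.eventually_lt_const one_pos).and
    ((hpow.atTop_mul_const hx).eventually_ge_atTop 1)).exists
  refine rho_lt_of_double_pow hx (hx.trans hxy) N (rho_lt_of_large h2 (by gcongr) ?_)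
  rwa [← mul_sub, mul_left_comm]

/-- `ρ_{ℤ,1/2}(α) = θ₂(α)/θ₃(α)` satisfies `0 < ρ < 1` on `(0,∞)` and is
strictly decreasing on `(0,∞)`. -/
theorem rho_Z_half_properties :
    (∀ α : ℝ, 0 < α → 0 < theta2 α / theta3 α ∧ theta2 α / theta3 α < 1) ∧
    StrictAntiOn (fun α : ℝ => theta2 α / theta3 α) (Set.Ioi 0) := by
  refine ⟨fun α hα => ⟨rho_pos hα, ?_⟩, fun x hx y _ hxy => rho_strictAnti hx hxy⟩
  exact (rho_strictAnti (half_pos hα) (half_lt_self hα)).trans_le (rho_le_one (half_pos hα))
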